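/- arXiv:1504.04396 — 3 statements merged into one kernel-verified Lean document; each statement's English description precedes it below -/
import Mathlib

section
/- For each k ∈ {0,1}, the power series Σ_{m≥0} c_{k,m} τ^m converges absolutely for every complex number τ with |τ| < 4. -/
/-!
Put `a = λ + k/2`. The functional equation of `Γ` gives the first-order recurrence
`c_{k,m+1} · (m+1+a)(2m+k+1)(2m+k+2) = -(m+a)³ · c_{k,m}`. For large `m` it reads
`c_{k,m+1} = q_m · c_{k,m}` with a rational function `q_m` of `m` tending to `-1/4`, and the ratio
test applies. The recurrence is valid for every complex `λ`, because `1/Γ` is entire.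
-/

open Filter Topology

-- Unlike `summable_of_ratio_test_tendsto_lt_one`, this allows infinitely many terms to vanish.
theorem summable_norm_of_norm_succ_le_mul {E : Type*} [SeminormedAddCommGroup E]
    {f : ℕ → E} {r : ℕ → ℝ} {L : ℝ} (hL : L < 1) (hr : Tendsto r atTop (𝓝 L))
    (hf : ∀ᶠ n in atTop, ‖f (n + 1)‖ ≤ r n * ‖f n‖) :
    Summable fun n => ‖f n‖ := by
  obtain ⟨s, hLs, hs⟩ := exists_between hL
  refine summable_of_ratio_norm_eventually_le hs ?_
  filter_upwards [hf, hr.eventually_le_const hLs] with n hn hrs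
  simpa only [norm_norm] using hn.trans (mul_le_mul_of_nonneg_right hrs (norm_nonneg _))

theorem summable_norm_mul_pow_of_succ_eq_mul {R : Type*} [SeminormedRing R]
    {c q : ℕ → R} {L x : R} (hq : Tendsto q atTop (𝓝 L)) (hx : ‖L‖ * ‖x‖ < 1)
    (hc : ∀ᶠ n in atTop, c (n + 1) = q n * c n) :
    Summable fun n => ‖c n * x ^ n‖ := by
  refine summable_norm_of_norm_succ_le_mul hx (hq.norm.mul_const ‖x‖) ?_
  filter_upwards [hc] with n hn
  calc ‖c (n + 1) * x ^ (n + 1)‖ = ‖q n * (c n * x ^ n) * x‖ := by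
        simp only [hn, pow_succ, mul_assoc]
    _ ≤ ‖q n‖ * ‖c n * x ^ n‖ * ‖x‖ := norm_mul_le_of_le (norm_mul_le _ _) le_rfl
    _ = ‖q n‖ * ‖x‖ * ‖c n * x ^ n‖ := mul_right_comm _ _ _

/-- The coefficient `c_{k,m}` of `τ ^ (m + k/2 + λ)` in the `k`-th component of the regularized
I-function of `[C³/Z₂]`, for an arbitrary complex `λ`. At a pole of `Γ` the conventions of
`Complex.Gamma` and of division give the value `0`, which is that of the entire function `1/Γ`. -/
noncomputable def regularizedICoeff (lam : ℂ) (k m : ℕ) : ℂ :=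
  (∏ l ∈ Finset.range m, (-lam - ((k : ℂ) / 2 + (l : ℂ))) ^ 3) /
    (Complex.Gamma (1 + (m : ℂ) + (k : ℂ) / 2 + lam) * ((2 * m + k).factorial : ℂ))

namespace regularizedICoeff

/-- The rational function of `m` that is the quotient `c_{k,m+1} / c_{k,m}` of consecutive
coefficients whenever `m + 1 + λ + k/2 ≠ 0` and `c_{k,m} ≠ 0`. Its factors are grouped so that each
has a limit as `m → ∞`. -/
noncomputable def succRatio (lam : ℂ) (k m : ℕ) : ℂ :=
  -((lam + k / 2 + m) / (1 + lam + k / 2 + m) * ((lam + k / 2 + m) / (k + 1 + 2 * m)) *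
    ((lam + k / 2 + m) / (k + 2 + 2 * m)))

theorem tendsto_succRatio (lam : ℂ) (k : ℕ) :
    Tendsto (succRatio lam k) atTop (𝓝 (-1 / 4)) := by
  have tendsto_factor (b : ℂ) {d : ℂ} (hd : d ≠ 0) :=
    tendsto_add_mul_div_add_mul_atTop_nhds (lam + k / 2) b 1 hd
  have tendsto_prod := (((tendsto_factor (1 + lam + k / 2) one_ne_zero).mul
    (tendsto_factor (k + 1) two_ne_zero)).mul (tendsto_factor (k + 2) two_ne_zero)).neg
  convert tendsto_prod using 2
  · simp only [succRatio, one_mul]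
  · norm_num

theorem succ_mul_eq (lam : ℂ) (k m : ℕ) :
    regularizedICoeff lam k (m + 1) *
        ((1 + lam + k / 2 + m) * (k + 1 + 2 * m) * (k + 2 + 2 * m)) =
      -(lam + k / 2 + m) ^ 3 * regularizedICoeff lam k m := by
  have gamma_rec := Complex.one_div_Gamma_eq_self_mul_one_div_Gamma_add_one
    (1 + (m : ℂ) + k / 2 + lam)
  have gamma_arg : 1 + ((m + 1 : ℕ) : ℂ) + k / 2 + lam = 1 + (m : ℂ) + k / 2 + lam + 1 := by
    push_cast; ring
  have factorial_rec : ((2 * (m + 1) + k).factorial : ℂ) =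
      (k + 2 + 2 * m) * (k + 1 + 2 * m) * (2 * m + k).factorial := by
    rw [show 2 * (m + 1) + k = 2 * m + k + 1 + 1 by ring, Nat.factorial_succ,
      Nat.factorial_succ]
    push_cast; ring
  have h₁ : (k + 1 + 2 * m : ℂ) ≠ 0 := mod_cast (by positivity : k + 1 + 2 * m ≠ 0)
  have h₂ : (k + 2 + 2 * m : ℂ) ≠ 0 := mod_cast (by positivity : k + 2 + 2 * m ≠ 0)
  simp only [regularizedICoeff, gamma_arg, factorial_rec, Finset.prod_range_succ,
    div_mul_eq_div_mul_one_div _ (Complex.Gamma _), div_eq_mul_inv _ (Complex.Gamma _), gamma_rec]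
  field_simp
  ring

theorem eventually_succ_eq_succRatio_mul (lam : ℂ) (k : ℕ) :
    ∀ᶠ m in atTop,
      regularizedICoeff lam k (m + 1) = succRatio lam k m * regularizedICoeff lam k m := by
  have eventually_ne : ∀ᶠ m : ℕ in atTop, (m : ℂ) ≠ -(1 + lam + k / 2) :=
    tendsto_natCast_atTop_cobounded.eventually_ne_cobounded _
  filter_upwards [eventually_ne] with m hm
  have h₀ : 1 + lam + k / 2 + m ≠ 0 := fun h => hm (eq_neg_of_add_eq_zero_right h)
  have h₁ : (k + 1 + 2 * m : ℂ) ≠ 0 := mod_cast (by positivity : k + 1 + 2 * m ≠ 0)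
  have h₂ : (k + 2 + 2 * m : ℂ) ≠ 0 := mod_cast (by positivity : k + 2 + 2 * m ≠ 0)
  have succRatio_eq : succRatio lam k m = -(lam + k / 2 + m) ^ 3 /
      ((1 + lam + k / 2 + m) * (k + 1 + 2 * m) * (k + 2 + 2 * m)) := by
    rw [succRatio, div_mul_div_comm, div_mul_div_comm, ← neg_div, pow_three']
  rw [succRatio_eq, div_mul_eq_mul_div, eq_div_iff (mul_ne_zero (mul_ne_zero h₀ h₁) h₂),
    succ_mul_eq]

end regularizedICoeff

theorem stmt_1_general (lam : ℂ) (k : ℕ) {τ : ℂ} (hτ : ‖τ‖ < 4) :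
    Summable fun m => ‖regularizedICoeff lam k m * τ ^ m‖ := by
  have limit_lt_one : ‖(-1 / 4 : ℂ)‖ * ‖τ‖ < 1 := by
    norm_num
    linarith
  exact summable_norm_mul_pow_of_succ_eq_mul (regularizedICoeff.tendsto_succRatio lam k)
    limit_lt_one (regularizedICoeff.eventually_succ_eq_succRatio_mul lam k)

/-- Fix a positive irrational real `λ` and `k ∈ {0,1}`, and set
`c_{k,m} = [∏_{l=0}^{m−1} (−λ−(k/2+l))³] / [Γ(1+m+k/2+λ)·(2m+k)!]`.  Then the power series
`Σ_{m≥0} c_{k,m} τ^m` converges absolutely for every complex `τ` with `|τ| < 4`. -/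
theorem stmt_1 (lam : ℝ) (hpos : 0 < lam) (hirr : Irrational lam)
    (k : ℕ) (hk : k ≤ 1)
    (c : ℕ → ℝ)
    (hc : ∀ m : ℕ, c m =
      (∏ l ∈ Finset.range m, (-lam - ((k : ℝ) / 2 + (l : ℝ))) ^ 3) /
        (Real.Gamma (1 + (m : ℝ) + (k : ℝ) / 2 + lam) * ((2 * m + k).factorial : ℝ)))
    (τ : ℂ) (hτ : ‖τ‖ < 4) :
    Summable (fun m : ℕ => ‖(c m : ℂ) * τ ^ m‖) := by
  have hc_complex (m : ℕ) : (c m : ℂ) = regularizedICoeff lam k m := by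
    rw [hc, regularizedICoeff]
    push_cast [← Complex.Gamma_ofReal]
    rfl
  simpa only [hc_complex] using stmt_1_general lam k hτ
end

section
/- For each k ∈ {0,1}, the function I_k^{reg}(τ) = Σ_{m≥0} c_{k,m} τ^{m+k/2+λ} (real τ ∈ (0,4), with τ^s = exp(s log τ) for complex s) is infinitely differentiable on (0,4) and satisfies the regularized Picard–Fuchs equation [τ·θ³ + (2θ−2λ)(2θ−2λ−1)θ] I_k^{reg}(τ) = 0 for all τ ∈ (0,4), where θ is the Euler operator θf(τ) = τ·f′(τ) and the displayed operator is the indicated composition of first-order operators. -/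
/-- The Euler operator `θ f (τ) = τ · f′(τ)` acting on complex-valued functions of a real
variable. -/
noncomputable def eulerOp (f : ℝ → ℂ) : ℝ → ℂ := fun τ => (τ : ℂ) * deriv f τ

/-!
On `τ ^ s * ∑ a m τ ^ m` the Euler operator `θ` acts diagonally, multiplying `a m` by `m + s`.
With `s = k / 2 + λ` this turns `(2θ - 2λ)(2θ - 2λ - 1)θ` into multiplication of `c m` by
`(2m + k)(2m + k - 1)(m + s)`, so the Picard–Fuchs equation becomes a two-term recurrence. It is the
one that the functional equation of `Γ` gives, and it starts properly since the indicial factor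
`k (k - 1)` vanishes for `k ∈ {0, 1}`. The same recurrence shows that the ratios
`c (m + 1) / c m` tend to `-1 / 4`, so the radius of convergence is at least `4`.
-/

open Filter Set Topology

/-- The series `∑ a m z ^ m` has radius of convergence at least `R`. -/
def SummableBelow (R : ℝ) (a : ℕ → ℂ) : Prop :=
  ∀ r ∈ Ioo 0 R, Summable fun m => ‖a m‖ * r ^ m

/-- The Frobenius series `τ ^ s * ∑ a m τ ^ m` with exponent `s`, the form of a solution of a linear
differential equation at a regular singular point. The power is factored out of the sum so that
convergence is a matter of the coefficients alone; the intended arguments are `τ > 0`. -/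
noncomputable def frobeniusSeries (s : ℂ) (a : ℕ → ℂ) (τ : ℝ) : ℂ :=
  (τ : ℂ) ^ s * ∑' m, a m * (τ : ℂ) ^ m

/-- The action of the Euler operator on the coefficients of a Frobenius series of exponent `s`. -/
def eulerCoeff (s : ℂ) (a : ℕ → ℂ) (m : ℕ) : ℂ := (m + s) * a m

/-- The coefficients `c_{k,m}` of the regularized `I`-function of `[ℂ³/ℤ₂]`, for complex `λ`. -/
noncomputable def regICoeff (lam : ℂ) (k m : ℕ) : ℂ :=
  (∏ l ∈ Finset.range m, (-lam - ((k : ℂ) / 2 + l)) ^ 3) /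
    (Complex.Gamma (1 + m + (k : ℂ) / 2 + lam) * (2 * m + k).factorial)

section Convergence

variable {R : ℝ} {a b : ℕ → ℂ}

lemma SummableBelow.const_smul (ha : SummableBelow R a) (z : ℂ) : SummableBelow R (z • a) :=
  fun r hr => by simpa only [Pi.smul_apply, norm_smul, mul_assoc] using (ha r hr).mul_left ‖z‖

lemma SummableBelow.sub (ha : SummableBelow R a) (hb : SummableBelow R b) :
    SummableBelow R (a - b) := by
  intro r hr
  have hr0 : 0 ≤ r := hr.1.le
  refine ((ha r hr).add (hb r hr)).of_nonneg_of_le (fun m => by positivity) fun m => ?_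
  rw [← add_mul]
  exact mul_le_mul_of_nonneg_right (norm_sub_le _ _) (by positivity)

lemma SummableBelow.eulerCoeff (ha : SummableBelow R a) (s : ℂ) :
    SummableBelow R (eulerCoeff s a) := by
  rintro r ⟨hr0, hrR⟩
  obtain ⟨t, hrt, htR⟩ := exists_between hrR
  have ht0 : 0 < t := hr0.trans hrt
  have hq : 1 < t / r := (one_lt_div hr0).2 hrt
  have hlinear : (fun m : ℕ => (m + s : ℂ)) =O[atTop] fun m => (t / r) ^ m :=
    (isLittleO_coe_const_pow_of_one_lt hq).isBigO.add <| by
      simpa using ((isLittleO_pow_const_const_pow_of_one_lt 0 hq).const_mul_left s).isBigO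
  refine summable_of_isBigO_nat (ha t ⟨ht0, htR⟩) ?_
  refine (hlinear.norm_left.mul (Asymptotics.isBigO_refl (fun m => ‖a m‖ * r ^ m) atTop)).congr
    (fun m => ?_) fun m => ?_
  · rw [_root_.eulerCoeff, norm_mul, mul_assoc]
  · rw [div_pow]
    field_simp

lemma SummableBelow.of_ratio_tendsto {q : ℕ → ℂ} (hrec : ∀ m, a (m + 1) = q m * a m)
    (hq : Tendsto (fun m => ‖q m‖) atTop (𝓝 R⁻¹)) : SummableBelow R a := by
  rintro r ⟨hr0, hrR⟩
  have hlim : R⁻¹ * r < 1 := by rwa [inv_mul_lt_one₀ (hr0.trans hrR)]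
  obtain ⟨ρ, hρ, hρ1⟩ := exists_between hlim
  refine summable_of_ratio_norm_eventually_le hρ1 ?_
  filter_upwards [(hq.mul_const r).eventually_le_const hρ] with m hm
  calc ‖‖a (m + 1)‖ * r ^ (m + 1)‖ = (‖q m‖ * r) * ‖‖a m‖ * r ^ m‖ := by
        rw [Real.norm_of_nonneg (by positivity), Real.norm_of_nonneg (by positivity), hrec,
          norm_mul]
        ring
    _ ≤ ρ * ‖‖a m‖ * r ^ m‖ := by gcongr

lemma SummableBelow.summable (ha : SummableBelow R a) {τ : ℝ} (hτ : τ ∈ Ioo 0 R) :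
    Summable fun m => a m * (τ : ℂ) ^ m := by
  refine Summable.of_norm ((ha τ hτ).congr fun m => ?_)
  rw [norm_mul, norm_pow, Complex.norm_of_nonneg hτ.1.le]

end Convergence

section FrobeniusSeries

variable {R : ℝ} {a b : ℕ → ℂ} {s : ℂ} {τ : ℝ}

lemma tsum_mul_cpow_eq_frobeniusSeries (hτ : 0 < τ) :
    ∑' m : ℕ, a m * (τ : ℂ) ^ (m + s) = frobeniusSeries s a τ := by
  have hτ0 : (τ : ℂ) ≠ 0 := Complex.ofReal_ne_zero.2 hτ.ne'
  rw [frobeniusSeries, ← tsum_mul_left]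
  refine tsum_congr fun m => ?_
  rw [Complex.cpow_add _ _ hτ0, Complex.cpow_natCast]
  ring

lemma frobeniusSeries_smul (z : ℂ) :
    frobeniusSeries s (z • a) τ = z * frobeniusSeries s a τ := by
  simp only [frobeniusSeries, Pi.smul_apply, smul_eq_mul, mul_assoc, tsum_mul_left]
  ring

lemma frobeniusSeries_sub (ha : SummableBelow R a) (hb : SummableBelow R b) (hτ : τ ∈ Ioo 0 R) :
    frobeniusSeries s (a - b) τ = frobeniusSeries s a τ - frobeniusSeries s b τ := by
  simp only [frobeniusSeries, Pi.sub_apply, sub_mul, ← mul_sub]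
  rw [(ha.summable hτ).tsum_sub (hb.summable hτ)]

lemma mul_frobeniusSeries_add_eq_zero (ha : SummableBelow R a) (hb0 : b 0 = 0)
    (hrec : ∀ m, b (m + 1) = -a m) (hτ : τ ∈ Ioo 0 R) :
    τ * frobeniusSeries s a τ + frobeniusSeries s b τ = 0 := by
  have hterm : ∀ m, b (m + 1) * (τ : ℂ) ^ (m + 1) = -τ * (a m * (τ : ℂ) ^ m) := fun m => by
    rw [hrec]
    ring
  have hb : Summable fun m => b m * (τ : ℂ) ^ m :=
    (summable_nat_add_iff 1).1 <| by simpa only [hterm] using (ha.summable hτ).mul_left (-τ : ℂ)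
  have hshift : ∑' m, b m * (τ : ℂ) ^ m = -τ * ∑' m, a m * (τ : ℂ) ^ m := by
    rw [hb.tsum_eq_zero_add, hb0, zero_mul, zero_add, tsum_congr hterm, tsum_mul_left]
  rw [frobeniusSeries, frobeniusSeries, hshift]
  ring

lemma hasDerivAt_tsum_mul_pow (ha : SummableBelow R a) (hτ : τ ∈ Ioo 0 R) :
    HasDerivAt (fun x : ℝ => ∑' m, a m * (x : ℂ) ^ m)
      (∑' m, a m * (m * (τ : ℂ) ^ (m - 1))) τ := by
  obtain ⟨r, hτr, hrR⟩ := exists_between hτ.2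
  have hr0 : 0 < r := hτ.1.trans hτr
  have hbound : Summable fun m => ‖a m‖ * (m * r ^ (m - 1)) := by
    refine (((ha.eulerCoeff 0) r ⟨hr0, hrR⟩).div_const r).congr fun m => ?_
    cases m with
    | zero => simp [eulerCoeff]
    | succ m =>
      rw [eulerCoeff, add_zero, norm_mul, Complex.norm_natCast, Nat.add_sub_cancel, pow_succ]
      field_simp
  have hterm : ∀ m, ∀ x ∈ Ioo 0 r,
      HasDerivAt (fun y : ℝ => a m * (y : ℂ) ^ m) (a m * (m * (x : ℂ) ^ (m - 1))) x :=
    fun m x _ => (hasDerivAt_pow m (x : ℂ)).comp_ofReal.const_mul (a m)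
  have hτ' : τ ∈ Ioo 0 r := ⟨hτ.1, hτr⟩
  refine hasDerivAt_tsum_of_isPreconnected hbound isOpen_Ioo isPreconnected_Ioo hterm
    (fun m x hx => ?_) hτ' (ha.summable hτ) hτ'
  have hx0 : 0 ≤ x := hx.1.le
  rw [norm_mul, norm_mul, Complex.norm_natCast, norm_pow, Complex.norm_of_nonneg hx0]
  gcongr
  exact hx.2.le

lemma hasDerivAt_frobeniusSeries (ha : SummableBelow R a) (hτ : τ ∈ Ioo 0 R) :
    HasDerivAt (frobeniusSeries s a) (frobeniusSeries s (eulerCoeff s a) τ / τ) τ := by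
  have hτ0 : (τ : ℂ) ≠ 0 := Complex.ofReal_ne_zero.2 hτ.1.ne'
  have hpow : HasDerivAt (fun x : ℝ => (x : ℂ) ^ s) (s * (τ : ℂ) ^ (s - 1)) τ :=
    (Complex.hasStrictDerivAt_cpow_const
      (Complex.ofReal_mem_slitPlane.2 hτ.1)).hasDerivAt.comp_ofReal
  have hterm : ∀ m, eulerCoeff s a m * (τ : ℂ) ^ m =
      τ * (a m * (m * (τ : ℂ) ^ (m - 1))) + s * (a m * (τ : ℂ) ^ m) := by
    intro m
    cases m with
    | zero => simp [eulerCoeff]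
    | succ m =>
      rw [eulerCoeff, Nat.add_sub_cancel, pow_succ]
      ring
  have hsum : Summable fun m => τ * (a m * (m * (τ : ℂ) ^ (m - 1))) := by
    refine (((ha.eulerCoeff s).summable hτ).sub ((ha.summable hτ).mul_left s)).congr fun m => ?_
    rw [hterm, add_sub_cancel_right]
  refine (hpow.mul (hasDerivAt_tsum_mul_pow ha hτ)).congr_deriv ?_
  rw [frobeniusSeries, tsum_congr hterm, hsum.tsum_add ((ha.summable hτ).mul_left s),
    tsum_mul_left, tsum_mul_left, Complex.cpow_sub _ _ hτ0, Complex.cpow_one]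
  field_simp
  ring

lemma contDiffOn_frobeniusSeries (ha : SummableBelow R a) :
    ContDiffOn ℝ (⊤ : ℕ∞) (frobeniusSeries s a) (Ioo 0 R) := by
  refine contDiffOn_infty.2 fun n => ?_
  induction n generalizing a with
  | zero =>
    exact contDiffOn_zero.2 fun τ hτ =>
      (hasDerivAt_frobeniusSeries ha hτ).continuousAt.continuousWithinAt
  | succ n ih =>
    rw [Nat.cast_succ, contDiffOn_succ_iff_deriv_of_isOpen isOpen_Ioo]
    refine ⟨fun τ hτ =>
      (hasDerivAt_frobeniusSeries ha hτ).differentiableAt.differentiableWithinAt, by simp, ?_⟩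
    have hinv : ContDiffOn ℝ n (fun τ : ℝ => (τ : ℂ)⁻¹) (Ioo 0 R) :=
      Complex.ofRealCLM.contDiff.contDiffOn.inv fun τ hτ => Complex.ofReal_ne_zero.2 hτ.1.ne'
    exact ((ih (ha.eulerCoeff s)).mul hinv).congr
      fun τ hτ => (hasDerivAt_frobeniusSeries ha hτ).deriv.trans (div_eq_mul_inv _ _)

lemma eqOn_eulerOp_frobeniusSeries {f : ℝ → ℂ} (ha : SummableBelow R a)
    (hf : EqOn f (frobeniusSeries s a) (Ioo 0 R)) :
    EqOn (eulerOp f) (frobeniusSeries s (eulerCoeff s a)) (Ioo 0 R) := by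
  intro τ hτ
  have hderiv := (hasDerivAt_frobeniusSeries (s := s) ha hτ).congr_of_eventuallyEq
    (eventuallyEq_of_mem (isOpen_Ioo.mem_nhds hτ) hf)
  rw [eulerOp, hderiv.deriv, mul_div_cancel₀ _ (Complex.ofReal_ne_zero.2 hτ.1.ne')]

lemma eqOn_mul_eulerOp_sub_frobeniusSeries {f : ℝ → ℂ} (ha : SummableBelow R a)
    (hf : EqOn f (frobeniusSeries s a) (Ioo 0 R)) (z w : ℂ) :
    EqOn (fun τ => z * eulerOp f τ - w * f τ)
      (frobeniusSeries s (z • eulerCoeff s a - w • a)) (Ioo 0 R) := by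
  intro τ hτ
  rw [frobeniusSeries_sub ((ha.eulerCoeff s).const_smul z) (ha.const_smul w) hτ,
    frobeniusSeries_smul, frobeniusSeries_smul, ← hf hτ, ← eqOn_eulerOp_frobeniusSeries ha hf hτ]

lemma picardFuchs_frobeniusSeries {f : ℝ → ℂ} {lam : ℂ} {k : ℕ} (ha : SummableBelow R a)
    (hf : EqOn f (frobeniusSeries (k / 2 + lam) a) (Ioo 0 R)) (hτ : τ ∈ Ioo 0 R) :
    2 * eulerOp (fun σ => 2 * eulerOp (eulerOp f) σ - (2 * lam + 1) * eulerOp f σ) τ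
        - 2 * lam * (2 * eulerOp (eulerOp f) τ - (2 * lam + 1) * eulerOp f τ) =
      frobeniusSeries (k / 2 + lam)
        (fun m => (2 * m + k) * (2 * m + k - 1) * (m + (k / 2 + lam)) * a m) τ := by
  have ha₁ := ha.eulerCoeff (k / 2 + lam)
  have hinner := eqOn_mul_eulerOp_sub_frobeniusSeries ha₁ (eqOn_eulerOp_frobeniusSeries ha hf)
    2 (2 * lam + 1)
  have houter := eqOn_mul_eulerOp_sub_frobeniusSeries
    (((ha₁.eulerCoeff _).const_smul 2).sub (ha₁.const_smul _)) hinner 2 (2 * lam)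
  refine (houter hτ).trans (congrArg (frobeniusSeries _ · τ) (funext fun m => ?_))
  simp only [eulerCoeff, Pi.sub_apply, Pi.smul_apply, smul_eq_mul]
  ring

end FrobeniusSeries

section Coefficients

variable {lam : ℂ} {k : ℕ}

lemma regICoeff_succ (m : ℕ) (hm : 1 + m + (k : ℂ) / 2 + lam ≠ 0) :
    regICoeff lam k (m + 1) =
      -((m + (k / 2 + lam)) ^ 3 /
        ((2 * m + k + 2) * (2 * m + k + 1) * (m + 1 + (k / 2 + lam)))) * regICoeff lam k m := by
  have hGamma : Complex.Gamma (1 + (m + 1 : ℕ) + (k : ℂ) / 2 + lam) =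
      (1 + m + (k : ℂ) / 2 + lam) * Complex.Gamma (1 + m + (k : ℂ) / 2 + lam) := by
    rw [← Complex.Gamma_add_one _ hm]
    congr 1
    push_cast
    ring
  have hfactorial : ((2 * (m + 1) + k).factorial : ℂ) =
      (2 * m + k + 2) * (2 * m + k + 1) * (2 * m + k).factorial := by
    rw [show 2 * (m + 1) + k = 2 * m + k + 1 + 1 by ring, Nat.factorial_succ, Nat.factorial_succ]
    push_cast
    ring
  rw [regICoeff, regICoeff, Finset.prod_range_succ, hGamma, hfactorial,
    show (m + 1 + (k / 2 + lam) : ℂ) = 1 + m + k / 2 + lam by ring, ← neg_div,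
    div_mul_div_comm]
  congr 1 <;> ring

lemma regICoeff_recurrence (m : ℕ) (hm : 1 + m + (k : ℂ) / 2 + lam ≠ 0) :
    (2 * m + k + 2) * (2 * m + k + 1) * (m + 1 + (k / 2 + lam)) * regICoeff lam k (m + 1) =
      -((m + (k / 2 + lam)) ^ 3 * regICoeff lam k m) := by
  have hA : (2 * m + k + 2 : ℂ) ≠ 0 := by norm_cast
  have hB : (2 * m + k + 1 : ℂ) ≠ 0 := by norm_cast
  have hP : (m + 1 + (k / 2 + lam) : ℂ) ≠ 0 := by convert hm using 1; ring
  rw [regICoeff_succ m hm, neg_mul, mul_neg, div_mul_eq_mul_div,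
    mul_div_cancel₀ _ (mul_ne_zero (mul_ne_zero hA hB) hP)]

lemma tendsto_regICoeff_ratio :
    Tendsto (fun m : ℕ => -((m + (k / 2 + lam)) ^ 3 /
      ((2 * m + k + 2) * (2 * m + k + 1) * (m + 1 + (k / 2 + lam)) : ℂ))) atTop (𝓝 (-4⁻¹)) := by
  have hlinear (x y : ℂ) {z : ℂ} (hz : z ≠ 0) :
      Tendsto (fun m : ℕ => (x + 1 * m) / (y + z * m)) atTop (𝓝 (1 / z)) :=
    tendsto_add_mul_div_add_mul_atTop_nhds x y 1 hz
  have hprod := (((hlinear (k / 2 + lam) (k + 2) two_ne_zero).mul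
    (hlinear (k / 2 + lam) (k + 1) two_ne_zero)).mul
    (hlinear (k / 2 + lam) (1 + (k / 2 + lam)) one_ne_zero)).neg
  convert hprod using 2 with m
  · rw [div_mul_div_comm, div_mul_div_comm]
    congr 2 <;> ring
  · norm_num

lemma summableBelow_regICoeff (hlam : ∀ m : ℕ, 1 + m + (k : ℂ) / 2 + lam ≠ 0) :
    SummableBelow 4 (regICoeff lam k) :=
  .of_ratio_tendsto (fun m => regICoeff_succ m (hlam m)) <| by
    simpa using (tendsto_regICoeff_ratio (lam := lam) (k := k)).norm

end Coefficients

theorem stmt_2_general (lam : ℂ) (k : ℕ) (hk : k ≤ 1)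
    (hlam : ∀ m : ℕ, 1 + (m : ℂ) + (k : ℂ) / 2 + lam ≠ 0) (c : ℕ → ℂ)
    (hc : ∀ m : ℕ, c m =
      (∏ l ∈ Finset.range m, (-lam - ((k : ℂ) / 2 + (l : ℂ))) ^ 3) /
        (Complex.Gamma (1 + (m : ℂ) + (k : ℂ) / 2 + lam) * ((2 * m + k).factorial : ℂ)))
    (I : ℝ → ℂ)
    (hI : ∀ τ ∈ Set.Ioo (0 : ℝ) 4,
      I τ = ∑' m : ℕ, c m * (τ : ℂ) ^ ((m : ℂ) + (k : ℂ) / 2 + lam)) :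
    ContDiffOn ℝ (⊤ : ℕ∞) I (Set.Ioo 0 4) ∧
    ∀ τ ∈ Set.Ioo (0 : ℝ) 4,
      (τ : ℂ) * eulerOp (eulerOp (eulerOp I)) τ +
        (2 * eulerOp (fun σ => 2 * eulerOp (eulerOp I) σ - (2 * lam + 1) * eulerOp I σ) τ
          - 2 * lam * (2 * eulerOp (eulerOp I) τ - (2 * lam + 1) * eulerOp I τ)) = 0 := by
  obtain rfl : c = regICoeff lam k := funext hc
  have hconv := summableBelow_regICoeff hlam
  have hI₀ : EqOn I (frobeniusSeries (k / 2 + lam) (regICoeff lam k)) (Ioo 0 4) := fun τ hτ => by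
    simpa only [add_assoc, tsum_mul_cpow_eq_frobeniusSeries hτ.1] using hI τ hτ
  refine ⟨(contDiffOn_frobeniusSeries hconv).congr hI₀, fun τ hτ => ?_⟩
  have hconv₁ := hconv.eulerCoeff (k / 2 + lam)
  have hconv₂ := hconv₁.eulerCoeff (k / 2 + lam)
  have hI₁ := eqOn_eulerOp_frobeniusSeries hconv hI₀
  have hI₂ := eqOn_eulerOp_frobeniusSeries hconv₁ hI₁
  have hI₃ := eqOn_eulerOp_frobeniusSeries hconv₂ hI₂
  rw [hI₃ hτ, picardFuchs_frobeniusSeries hconv hI₀ hτ]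
  refine mul_frobeniusSeries_add_eq_zero (hconv₂.eulerCoeff _) ?_ (fun m => ?_) hτ
  · interval_cases k <;> simp
  · simp only [eulerCoeff]
    push_cast
    linear_combination regICoeff_recurrence m (hlam m)

/-- Fix a positive irrational real `λ` and `k ∈ {0,1}`, and set
`c_{k,m} = [∏_{l=0}^{m−1} (−λ−(k/2+l))³] / [Γ(1+m+k/2+λ)·(2m+k)!]`.  The component
`I_k^{reg}(τ) = Σ_{m≥0} c_{k,m} τ^{m+k/2+λ}` of the regularized `I`-function of `[ℂ³/ℤ₂]`
(for real `τ ∈ (0,4)`, with `τ^s = exp(s log τ)`) is infinitely differentiable on `(0,4)`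
and satisfies the regularized Picard–Fuchs equation
`[τ·θ³ + (2θ−2λ)(2θ−2λ−1)θ] I_k^{reg}(τ) = 0` there, where `θ` is the Euler operator. -/
theorem stmt_2 (lam : ℝ) (hpos : 0 < lam) (hirr : Irrational lam)
    (k : ℕ) (hk : k ≤ 1)
    (c : ℕ → ℝ)
    (hc : ∀ m : ℕ, c m =
      (∏ l ∈ Finset.range m, (-lam - ((k : ℝ) / 2 + (l : ℝ))) ^ 3) /
        (Real.Gamma (1 + (m : ℝ) + (k : ℝ) / 2 + lam) * ((2 * m + k).factorial : ℝ)))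
    (I : ℝ → ℂ)
    (hI : ∀ τ ∈ Set.Ioo (0 : ℝ) 4,
      I τ = ∑' m : ℕ, (c m : ℂ) * (τ : ℂ) ^ ((m : ℂ) + (k : ℂ) / 2 + (lam : ℂ))) :
    ContDiffOn ℝ (⊤ : ℕ∞) I (Set.Ioo 0 4) ∧
    ∀ τ ∈ Set.Ioo (0 : ℝ) 4,
      (τ : ℂ) * eulerOp (eulerOp (eulerOp I)) τ +
        (2 * eulerOp (fun σ => 2 * eulerOp (eulerOp I) σ - (2 * (lam : ℂ) + 1) * eulerOp I σ) τ
          - 2 * (lam : ℂ) *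
            (2 * eulerOp (eulerOp I) τ - (2 * (lam : ℂ) + 1) * eulerOp I τ)) = 0 := by
  refine stmt_2_general lam k hk (fun m => ?_) (fun m => c m) (fun m => ?_) I hI
  · have hm : 1 + (m : ℝ) + k / 2 + lam ≠ 0 := by positivity
    simpa using Complex.ofReal_ne_zero.2 hm
  · rw [hc]
    push_cast [← Complex.Gamma_ofReal]
    rfl
end

section
/- Let a ≥ 0 and C > 0, and let f : [0,∞) → C be continuous with f(0) = 0, differentiable on (0,∞), and satisfying |f(τ)| ≤ C·e^{aτ} and τ·|f′(τ)| ≤ C·e^{aτ} for all τ > 0. For real u > a define F(u) = u·∫₀^∞ e^{−uτ} f(τ) dτ. Then F is differentiable on (a,∞), and for all complex numbers α, β and all real u > a the function τ ↦ e^{−uτ}(α·τ·f′(τ) + β·f(τ)) is integrable on (0,∞) and u·∫₀^∞ e^{−uτ}(α·τ·f′(τ) + β·f(τ)) dτ = −α·u·F′(u) + β·F(u). -/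
open MeasureTheory

/-!
If `g` is differentiable and `g 0 = 0`, integration by parts turns differentiation of `g` into
multiplication of its Laplace transform by `s`. Applied to `g τ = τ f(τ)`, which tends to `0` at
`0` because `f` is bounded there, this reads `s L(τ f)(s) = L(f)(s) + L(τ f')(s)`. As
`L(f)' = -L(τ f)`, the product rule gives
`(s L(f)(s))' = L(f)(s) - s L(τ f)(s) = -L(τ f')(s)`, and the identity with `α` and `β` follows by
linearity.
-/

open Set Filter
open scoped Topology

section Laplace

variable {E : Type*} [NormedAddCommGroup E] [NormedSpace ℂ E] {f g f' g' : ℝ → E} {s s₀ : ℂ}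

/-- Absolute convergence at `s` of the Laplace integral of the restriction of `f` to `(0, ∞)`. -/
def LaplaceConvergent (f : ℝ → E) (s : ℂ) : Prop :=
  IntegrableOn (fun τ : ℝ => Complex.exp (-s * τ) • f τ) (Ioi 0)

/-- The one-sided Laplace transform of `f`. It takes the junk value `0` at any `s` where the
integral does not converge absolutely. -/
noncomputable def laplaceTransform (f : ℝ → E) (s : ℂ) : E :=
  ∫ τ in Ioi (0 : ℝ), Complex.exp (-s * τ) • f τ

theorem norm_cexp_neg_mul_ofReal (s : ℂ) (τ : ℝ) :
    ‖Complex.exp (-s * τ)‖ = Real.exp (-s.re * τ) := by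
  simp [Complex.norm_exp]

theorem continuous_cexp_neg_mul_ofReal (s : ℂ) :
    Continuous fun τ : ℝ => Complex.exp (-s * τ) := by
  fun_prop

theorem hasDerivAt_cexp_neg_mul_ofReal (s : ℂ) (τ : ℝ) :
    HasDerivAt (fun t : ℝ => Complex.exp (-s * t)) (Complex.exp (-s * τ) * -s) τ := by
  simpa only [id, mul_one] using! ((hasDerivAt_id (τ : ℂ)).const_mul (-s)).cexp.comp_ofReal

/-- Lowering the decay rate by `δ` absorbs a factor `τ`, since `δ τ ≤ exp (δ τ)`. -/
theorem norm_cexp_smul_smul_le {δ τ : ℝ} (hδ : 0 < δ) (hs : s₀.re + δ ≤ s.re) (hτ : 0 ≤ τ)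
    (x : E) : ‖Complex.exp (-s * τ) • τ • x‖ ≤ δ⁻¹ * ‖Complex.exp (-s₀ * τ) • x‖ := by
  have le_exp : δ * τ ≤ Real.exp (δ * τ) := by linarith [Real.add_one_le_exp (δ * τ)]
  have exp_mul_le : Real.exp (-s.re * τ) * τ ≤ δ⁻¹ * Real.exp (-s₀.re * τ) :=
    calc Real.exp (-s.re * τ) * τ
        ≤ Real.exp (-(s₀.re + δ) * τ) * (δ⁻¹ * Real.exp (δ * τ)) := by
          gcongr
          rwa [← div_eq_inv_mul, le_div_iff₀' hδ]
      _ = δ⁻¹ * Real.exp (-s₀.re * τ) := by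
          rw [mul_left_comm, ← Real.exp_add]
          ring_nf
  simp only [norm_smul, norm_cexp_neg_mul_ofReal, Real.norm_of_nonneg hτ, ← mul_assoc]
  gcongr

namespace LaplaceConvergent

theorem add (hf : LaplaceConvergent f s) (hg : LaplaceConvergent g s) :
    LaplaceConvergent (fun τ => f τ + g τ) s := by
  simpa only [LaplaceConvergent, smul_add] using! Integrable.add hf hg

theorem const_smul (hf : LaplaceConvergent f s) (c : ℂ) :
    LaplaceConvergent (fun τ => c • f τ) s := by
  simpa only [LaplaceConvergent, smul_comm _ c] using! Integrable.smul c hf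

theorem aestronglyMeasurable (hf : LaplaceConvergent f s) :
    AEStronglyMeasurable f (volume.restrict (Ioi 0)) := by
  have h := (continuous_cexp_neg_mul_ofReal (-s)).aestronglyMeasurable.smul
    (Integrable.aestronglyMeasurable hf)
  refine h.congr (.of_forall fun τ => ?_)
  simp [smul_smul, ← Complex.exp_add]

theorem of_norm_le_exp {a C : ℝ} (hf : AEStronglyMeasurable f (volume.restrict (Ioi 0)))
    (hbound : ∀ τ : ℝ, 0 < τ → ‖f τ‖ ≤ C * Real.exp (a * τ)) (hs : a < s.re) :
    LaplaceConvergent f s := by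
  have hexp : IntegrableOn (fun τ : ℝ => C * Real.exp ((a - s.re) * τ)) (Ioi 0) :=
    (integrableOn_exp_mul_Ioi (sub_neg.2 hs) 0).const_mul C
  refine hexp.mono' ((continuous_cexp_neg_mul_ofReal s).aestronglyMeasurable.smul hf)
    (ae_restrict_of_forall_mem measurableSet_Ioi fun τ hτ => ?_)
  rw [norm_smul, norm_cexp_neg_mul_ofReal]
  calc Real.exp (-s.re * τ) * ‖f τ‖ ≤ Real.exp (-s.re * τ) * (C * Real.exp (a * τ)) := by
        gcongr
        exact hbound τ hτ
    _ = C * Real.exp ((a - s.re) * τ) := by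
        rw [mul_left_comm, ← Real.exp_add]
        ring_nf

theorem mono (hf : LaplaceConvergent f s₀) (hs : s₀.re ≤ s.re) : LaplaceConvergent f s := by
  refine hf.norm.mono' ((continuous_cexp_neg_mul_ofReal s).aestronglyMeasurable.smul
    hf.aestronglyMeasurable) (ae_restrict_of_forall_mem measurableSet_Ioi fun τ hτ => ?_)
  have hτ' : 0 ≤ τ := le_of_lt hτ
  simp only [norm_smul, norm_cexp_neg_mul_ofReal]
  gcongr

theorem id_smul (hf : LaplaceConvergent f s₀) (hs : s₀.re < s.re) :
    LaplaceConvergent (fun τ => τ • f τ) s := by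
  refine (hf.norm.const_mul (s.re - s₀.re)⁻¹).mono' ?_
    (ae_restrict_of_forall_mem measurableSet_Ioi fun τ hτ =>
      norm_cexp_smul_smul_le (sub_pos.2 hs) (add_sub_cancel _ _).le (le_of_lt hτ) (f τ))
  exact (continuous_cexp_neg_mul_ofReal s).aestronglyMeasurable.smul
    (continuous_id.aestronglyMeasurable.smul hf.aestronglyMeasurable)

theorem id_smul_deriv_of_norm_le_exp [CompleteSpace E] {a C : ℝ}
    (hbound : ∀ τ : ℝ, 0 < τ → τ * ‖deriv f τ‖ ≤ C * Real.exp (a * τ)) (hs : a < s.re) :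
    LaplaceConvergent (fun τ => τ • deriv f τ) s := by
  refine .of_norm_le_exp (a := a) (C := C)
    (continuous_id.aestronglyMeasurable.smul (aestronglyMeasurable_deriv f _)) (fun τ hτ => ?_) hs
  simpa only [norm_smul, Real.norm_of_nonneg hτ.le] using hbound τ hτ

end LaplaceConvergent

theorem laplaceTransform_add (hf : LaplaceConvergent f s) (hg : LaplaceConvergent g s) :
    laplaceTransform (fun τ => f τ + g τ) s = laplaceTransform f s + laplaceTransform g s := by
  simpa only [laplaceTransform, smul_add] using integral_add hf hg

theorem laplaceTransform_const_smul (c : ℂ) (f : ℝ → E) (s : ℂ) :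
    laplaceTransform (fun τ => c • f τ) s = c • laplaceTransform f s := by
  simp only [laplaceTransform, smul_comm _ c, integral_smul]

theorem hasDerivAt_laplaceTransform (hf : LaplaceConvergent f s₀) (hs : s₀.re < s.re) :
    HasDerivAt (laplaceTransform f) (-laplaceTransform (fun τ => τ • f τ) s) s := by
  obtain ⟨σ, hσ₀, hσ⟩ := exists_between hs
  have half_plane_mem : {z : ℂ | σ < z.re} ∈ 𝓝 s :=
    (isOpen_lt continuous_const Complex.continuous_re).mem_nhds hσ
  have hderiv (τ : ℝ) (z : ℂ) : HasDerivAt (fun z : ℂ => Complex.exp (-z * τ) • f τ)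
      (-(Complex.exp (-z * τ) • τ • f τ)) z := by
    have h := ((hasDerivAt_neg z).mul_const (τ : ℂ)).cexp.smul_const (f τ)
    simpa only [neg_one_mul, mul_neg, neg_smul, mul_smul, Complex.coe_smul] using h
  have h := (hasDerivAt_integral_of_dominated_loc_of_deriv_le half_plane_mem
    (.of_forall fun z => (continuous_cexp_neg_mul_ofReal z).aestronglyMeasurable.smul
      hf.aestronglyMeasurable)
    (hf.mono hs.le) (hf.id_smul hs).neg.aestronglyMeasurable
    (ae_restrict_of_forall_mem measurableSet_Ioi fun τ hτ z (hz : σ < z.re) => by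
      rw [norm_neg]
      exact norm_cexp_smul_smul_le (sub_pos.2 hσ₀) (by linarith) (le_of_lt hτ) (f τ))
    (hf.norm.const_mul (σ - s₀.re)⁻¹) (.of_forall fun τ z _ => hderiv τ z)).2
  rwa [integral_neg] at h

theorem laplaceTransform_eq_of_hasDerivAt [CompleteSpace E] (hg₀ : ContinuousWithinAt g (Ici 0) 0)
    (hderiv : ∀ τ : ℝ, 0 < τ → HasDerivAt g (g' τ) τ) (hg : LaplaceConvergent g s)
    (hg' : LaplaceConvergent g' s) :
    laplaceTransform g' s = s • laplaceTransform g s - g 0 := by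
  have hkernel (τ : ℝ) (hτ : τ ∈ Ioi (0 : ℝ)) :
      HasDerivAt (fun τ : ℝ => Complex.exp (-s * τ) • g τ)
        (Complex.exp (-s * τ) • g' τ - s • Complex.exp (-s * τ) • g τ) τ := by
    refine ((hasDerivAt_cexp_neg_mul_ofReal s τ).smul (hderiv τ hτ)).congr_deriv ?_
    module
  have hint : IntegrableOn
      (fun τ : ℝ => Complex.exp (-s * τ) • g' τ - s • Complex.exp (-s * τ) • g τ) (Ioi 0) :=
    Integrable.sub hg' (Integrable.smul s hg)
  have hparts := integral_Ioi_of_hasDerivAt_of_tendsto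
    ((continuous_cexp_neg_mul_ofReal s).continuousWithinAt.smul hg₀) hkernel hint
    (tendsto_zero_of_hasDerivAt_of_integrableOn_Ioi hkernel hint hg)
  have hsplit : ∫ τ in Ioi (0 : ℝ),
      (Complex.exp (-s * τ) • g' τ - s • Complex.exp (-s * τ) • g τ) =
        laplaceTransform g' s - s • laplaceTransform g s := by
    rw [laplaceTransform, laplaceTransform, ← integral_smul]
    exact integral_sub hg' (Integrable.smul s hg)
  rw [sub_eq_add_neg, ← sub_eq_iff_eq_add', ← hsplit, hparts]
  simp

theorem smul_laplaceTransform_id_smul [CompleteSpace E]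
    (hf₀ : Tendsto (fun τ => τ • f τ) (𝓝[>] 0) (𝓝 0))
    (hderiv : ∀ τ : ℝ, 0 < τ → HasDerivAt f (f' τ) τ) (hf : LaplaceConvergent f s₀)
    (hs : s₀.re < s.re) (hf' : LaplaceConvergent (fun τ => τ • f' τ) s) :
    s • laplaceTransform (fun τ => τ • f τ) s =
      laplaceTransform f s + laplaceTransform (fun τ => τ • f' τ) s := by
  have hcont : ContinuousWithinAt (fun τ => τ • f τ) (Ici 0) 0 := by
    rw [← continuousWithinAt_Ioi_iff_Ici]
    simpa only [ContinuousWithinAt, zero_smul] using hf₀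
  have hprod (τ : ℝ) (hτ : 0 < τ) : HasDerivAt (fun τ => τ • f τ) (f τ + τ • f' τ) τ := by
    simpa only [id, one_smul, add_comm] using! (hasDerivAt_id τ).smul (hderiv τ hτ)
  have hfs : LaplaceConvergent f s := hf.mono hs.le
  rw [← laplaceTransform_add hfs hf',
    laplaceTransform_eq_of_hasDerivAt hcont hprod (hf.id_smul hs) (hfs.add hf'), zero_smul,
    sub_zero]

theorem hasDerivAt_smul_laplaceTransform [CompleteSpace E]
    (hf₀ : Tendsto (fun τ => τ • f τ) (𝓝[>] 0) (𝓝 0))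
    (hderiv : ∀ τ : ℝ, 0 < τ → HasDerivAt f (f' τ) τ) (hf : LaplaceConvergent f s₀)
    (hs : s₀.re < s.re) (hf' : LaplaceConvergent (fun τ => τ • f' τ) s) :
    HasDerivAt (fun z => z • laplaceTransform f z)
      (-laplaceTransform (fun τ => τ • f' τ) s) s := by
  refine ((hasDerivAt_id s).smul (hasDerivAt_laplaceTransform hf hs)).congr_deriv ?_
  rw [id, smul_neg, smul_laplaceTransform_id_smul hf₀ hderiv hf hs hf', one_smul]
  abel

theorem tendsto_id_smul_zero_of_norm_le_exp {a C : ℝ}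
    (hbound : ∀ τ : ℝ, 0 < τ → ‖f τ‖ ≤ C * Real.exp (a * τ)) :
    Tendsto (fun τ => τ • f τ) (𝓝[>] 0) (𝓝 0) := by
  have hcont : Continuous fun τ : ℝ => τ * (C * Real.exp (a * τ)) := by fun_prop
  have hlim : Tendsto (fun τ : ℝ => τ * (C * Real.exp (a * τ))) (𝓝[>] 0) (𝓝 0) := by
    simpa only [zero_mul] using (hcont.tendsto 0).mono_left nhdsWithin_le_nhds
  refine squeeze_zero_norm' ?_ hlim
  filter_upwards [self_mem_nhdsWithin] with τ (hτ : 0 < τ)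
  rw [norm_smul, Real.norm_of_nonneg hτ.le]
  gcongr
  exact hbound τ hτ

theorem stmt_4_general [CompleteSpace E] (a C : ℝ) (f : ℝ → E)
    (hf_diff : ∀ τ : ℝ, 0 < τ → DifferentiableAt ℝ f τ)
    (hf_bd : ∀ τ : ℝ, 0 < τ → ‖f τ‖ ≤ C * Real.exp (a * τ))
    (hf'_bd : ∀ τ : ℝ, 0 < τ → τ * ‖deriv f τ‖ ≤ C * Real.exp (a * τ))
    (F : ℝ → E) (hF : ∀ u : ℝ, a < u → F u = (u : ℂ) • laplaceTransform f u) :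
    (∀ u : ℝ, a < u → DifferentiableAt ℝ F u) ∧
    ∀ (α β : ℂ) (u : ℝ), a < u →
      LaplaceConvergent (fun τ => (α * (τ : ℂ)) • deriv f τ + β • f τ) u ∧
      (u : ℂ) • laplaceTransform (fun τ => (α * (τ : ℂ)) • deriv f τ + β • f τ) u =
        (-α * (u : ℂ)) • deriv F u + β • F u := by
  have hf {s : ℂ} (hs : a < s.re) : LaplaceConvergent f s :=
    .of_norm_le_exp (ContinuousOn.aestronglyMeasurable
      (fun τ hτ => (hf_diff τ hτ).continuousAt.continuousWithinAt) measurableSet_Ioi) hf_bd hs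
  have hf' {s : ℂ} (hs : a < s.re) : LaplaceConvergent (fun τ => τ • deriv f τ) s :=
    .id_smul_deriv_of_norm_le_exp hf'_bd hs
  have hF' (u : ℝ) (hu : a < u) :
      HasDerivAt F (-laplaceTransform (fun τ => τ • deriv f τ) u) u := by
    obtain ⟨σ, haσ, hσu⟩ := exists_between hu
    have hcomplex := hasDerivAt_smul_laplaceTransform (s₀ := σ) (s := u)
      (tendsto_id_smul_zero_of_norm_le_exp hf_bd) (fun τ hτ => (hf_diff τ hτ).hasDerivAt)
      (hf haσ) hσu (hf' hu)
    have hreal := hcomplex.scomp u Complex.ofRealCLM.hasDerivAt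
    rw [Complex.ofRealCLM_apply, Complex.ofReal_one, one_smul] at hreal
    refine hreal.congr_of_eventuallyEq ?_
    filter_upwards [Ioi_mem_nhds hu] with x hx using hF x hx
  refine ⟨fun u hu => (hF' u hu).differentiableAt, fun α β u hu => ?_⟩
  have hαf' := (hf' (s := u) hu).const_smul α
  have hβf := (hf (s := u) hu).const_smul β
  simp only [mul_smul, Complex.coe_smul]
  refine ⟨hαf'.add hβf, ?_⟩
  rw [laplaceTransform_add hαf' hβf, laplaceTransform_const_smul, laplaceTransform_const_smul,
    (hF' u hu).deriv, hF u hu]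
  module

end Laplace

/-- the Laplace-transform intertwining identity, Equation (5.8) of the paper.
Let `a ≥ 0`, `C > 0`, and let `f : [0,∞) → ℂ` be continuous with `f(0) = 0`, differentiable on
`(0,∞)`, with `|f(τ)| ≤ C·e^{aτ}` and `τ·|f′(τ)| ≤ C·e^{aτ}` for `τ > 0`.  For `u > a` set
`F(u) = u·∫₀^∞ e^{−uτ} f(τ) dτ`.  Then `F` is differentiable on `(a,∞)`, and for all complex
`α, β` and real `u > a` the function `τ ↦ e^{−uτ}(α·τ·f′(τ) + β·f(τ))` is integrable on
`(0,∞)` and `u·∫₀^∞ e^{−uτ}(α·τ·f′(τ) + β·f(τ)) dτ = −α·u·F′(u) + β·F(u)`. -/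
theorem stmt_4 (a C : ℝ) (ha : 0 ≤ a) (hC : 0 < C) (f : ℝ → ℂ)
    (hf_cont : ContinuousOn f (Set.Ici 0)) (hf0 : f 0 = 0)
    (hf_diff : ∀ τ : ℝ, 0 < τ → DifferentiableAt ℝ f τ)
    (hf_bd : ∀ τ : ℝ, 0 < τ → ‖f τ‖ ≤ C * Real.exp (a * τ))
    (hf'_bd : ∀ τ : ℝ, 0 < τ → τ * ‖deriv f τ‖ ≤ C * Real.exp (a * τ))
    (F : ℝ → ℂ)
    (hF : ∀ u : ℝ, a < u →
      F u = (u : ℂ) * ∫ τ in Set.Ioi (0 : ℝ), Complex.exp (-(u : ℂ) * (τ : ℂ)) * f τ) :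
    (∀ u : ℝ, a < u → DifferentiableAt ℝ F u) ∧
    ∀ (α β : ℂ) (u : ℝ), a < u →
      IntegrableOn
        (fun τ : ℝ => Complex.exp (-(u : ℂ) * (τ : ℂ)) *
          (α * (τ : ℂ) * deriv f τ + β * f τ)) (Set.Ioi 0) ∧
      (u : ℂ) * ∫ τ in Set.Ioi (0 : ℝ), Complex.exp (-(u : ℂ) * (τ : ℂ)) *
          (α * (τ : ℂ) * deriv f τ + β * f τ)
        = -α * (u : ℂ) * deriv F u + β * F u :=
  stmt_4_general a C f hf_diff hf_bd hf'_bd F hF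
end
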